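/- For |q| < 1, the series ψ(q) = Σ_{k=0}^∞ (−1)^k (2k+1) q^{k(k+1)/2} equals the infinite product ∏_{ν=1}^∞ (1 − q^ν)^3. -/

import Mathlib

/-- Gaussian binomials, by a Pascal rule. -/
def qbin {R : Type*} [CommRing R] (q : R) : ℕ → ℕ → R
  | _, 0 => 1
  | 0, _ + 1 => 0
  | n + 1, k + 1 => qbin q n (k + 1) + q ^ (n - k) * qbin q n k

/-- Finite `q`-Pochhammer symbol `(q; q)_n`. -/
def qpoch (q : ℂ) (n : ℕ) : ℂ := ∏ i ∈ Finset.range n, (1 - q ^ (i + 1))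

lemma qbin_zero_right {R : Type*} [CommRing R] (q : R) (n : ℕ) : qbin q n 0 = 1 := by
  cases n <;> rfl

lemma qbin_succ {R : Type*} [CommRing R] (q : R) (n k : ℕ) :
    qbin q (n + 1) (k + 1) = qbin q n (k + 1) + q ^ (n - k) * qbin q n k := rfl

lemma qbin_of_lt {R : Type*} [CommRing R] (q : R) (n : ℕ) : ∀ k, n < k → qbin q n k = 0 := by
  induction n with
  | zero => intro k hk; obtain ⟨k, rfl⟩ := Nat.exists_eq_succ_of_ne_zero hk.ne'; rfl
  | succ n ih =>
    intro k hk
    obtain ⟨k, rfl⟩ := Nat.exists_eq_succ_of_ne_zero (by omega : k ≠ 0)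
    rw [Nat.succ_eq_add_one, qbin_succ, ih _ (by omega), ih _ (by omega)]; simp

lemma qbin_C (q : ℂ) (n : ℕ) : ∀ k, qbin (Polynomial.C q) n k = Polynomial.C (qbin q n k) := by
  induction n with
  | zero => intro k; cases k <;> simp [qbin]
  | succ n ih =>
    intro k
    cases k with
    | zero => simp [qbin]
    | succ k => simp [qbin_succ, ih]

lemma qpoch_succ (q : ℂ) (n : ℕ) : qpoch q (n + 1) = qpoch q n * (1 - q ^ (n + 1)) :=
  Finset.prod_range_succ _ _

lemma qbin_self {R : Type*} [CommRing R] (q : R) (n : ℕ) : qbin q n n = 1 := by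
  induction n with
  | zero => rfl
  | succ n ih => rw [qbin_succ, qbin_of_lt _ _ _ (Nat.lt_succ_self n), ih]; simp

lemma qbin_mul (q : ℂ) (s : ℕ) : ∀ k m, k + m = s →
    qbin q (k + m) k * (qpoch q k * qpoch q m) = qpoch q (k + m) := by
  induction s with
  | zero =>
    intro k m h
    obtain ⟨rfl, rfl⟩ : k = 0 ∧ m = 0 := by omega
    simp [qbin, qpoch]
  | succ s ih =>
    intro k m h
    rcases k with _ | k
    · simp [qbin_zero_right, qpoch]
    rcases m with _ | m
    · simp [qbin_self, qpoch]
    have h1 := ih (k + 1) m (by omega)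
    have h2 := ih k (m + 1) (by omega)
    have e : k + 1 + (m + 1) = (k + 1 + m) + 1 := by ring
    have e2 : k + (m + 1) = k + 1 + m := by ring
    rw [e2] at h2
    rw [e, qbin_succ, qpoch_succ q (k + 1 + m)]
    have e3 : k + 1 + m - k = m + 1 := by omega
    rw [e3]
    rw [qpoch_succ q m] at *
    rw [qpoch_succ q k] at *
    linear_combination (1 - q ^ (m + 1)) * h1 + q ^ (m + 1) * (1 - q ^ (k + 1)) * h2

lemma qbinomial {R : Type*} [CommRing R] (q x y : R) (N : ℕ) :
    ∏ i ∈ Finset.range N, (y + x * q ^ i) =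
      ∑ k ∈ Finset.range (N + 1), q ^ (k.choose 2) * x ^ k * y ^ (N - k) * qbin q N k := by
  induction N with
  | zero => simp [qbin]
  | succ N ih =>
    rw [Finset.prod_range_succ, ih, Finset.sum_range_succ' _ (N + 1)]
    have hA : y * ∑ k ∈ Finset.range (N + 1), q ^ (k.choose 2) * x ^ k * y ^ (N - k) * qbin q N k
        = ∑ k ∈ Finset.range (N + 1),
          q ^ ((k + 1).choose 2) * x ^ (k + 1) * y ^ (N - k) * qbin q N (k + 1) + y ^ (N + 1) := by
      have h := Finset.sum_range_succ'
        (fun k => q ^ (k.choose 2) * x ^ k * y ^ (N + 1 - k) * qbin q N k) (N + 1)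
      rw [Finset.sum_range_succ, qbin_of_lt q N (N + 1) (Nat.lt_succ_self N)] at h
      simp only [Nat.add_sub_add_right, qbin_zero_right] at h
      simp only [mul_zero, add_zero, Nat.choose_zero_succ, pow_zero, one_mul, mul_one,
        Nat.sub_zero] at h
      rw [← h, Finset.mul_sum]
      refine Finset.sum_congr rfl fun k hk => ?_
      have : N + 1 - k = (N - k) + 1 := by have := Finset.mem_range.1 hk; omega
      rw [this]; ring
    rw [mul_add, mul_comm _ y, hA, Finset.sum_mul]
    simp only [qbin_zero_right, Nat.add_sub_add_right, Nat.choose_zero_succ, pow_zero, one_mul,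
      mul_one, Nat.sub_zero]
    rw [add_right_comm, ← Finset.sum_add_distrib]
    congr 1
    refine Finset.sum_congr rfl fun k hk => ?_
    rw [qbin_succ]
    have hN : q ^ N = q ^ (N - k) * q ^ k := by
      rw [← pow_add]; congr 1; have := Finset.mem_range.1 hk; omega
    have hc : (k + 1).choose 2 = k + k.choose 2 := by
      rw [Nat.choose_succ_succ' k 1, Nat.choose_one_right]
    rw [hN, hc]; ring

open Polynomial in
lemma deriv_identity (q : ℂ) (n : ℕ) :
    -q ^ n * ((∏ i ∈ Finset.range n, (q ^ n - q ^ i)) *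
        ∏ i ∈ Finset.range n, (q ^ n - q ^ (n + 1 + i))) =
      ∑ k ∈ Finset.range (2 * n + 2),
        (k : ℂ) * (-1) ^ k * q ^ (k.choose 2 + n * (2 * n + 1 - k)) * qbin q (2 * n + 1) k := by
  have h := qbinomial (C q) (-X) (C q ^ n) (2 * n + 1)
  have e : 2 * n + 1 = (n + 1) + n := by ring
  have hl : ∏ i ∈ Finset.range (2 * n + 1), (C q ^ n + -X * C q ^ i) =
      (C q ^ n - X * C q ^ n) * ((∏ i ∈ Finset.range n, (C q ^ n - X * C q ^ i)) *
        ∏ i ∈ Finset.range n, (C q ^ n - X * C q ^ (n + 1 + i))) := by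
    rw [e, Finset.prod_range_add, Finset.prod_range_succ]
    simp only [neg_mul, ← sub_eq_add_neg]
    ring
  rw [hl] at h
  have hr : ∀ k ∈ Finset.range (2 * n + 1 + 1), (derivative (C q ^ (k.choose 2) * (-X) ^ k *
      (C q ^ n) ^ (2 * n + 1 - k) * qbin (C q) (2 * n + 1) k)).eval 1 =
      (k : ℂ) * (-1) ^ k * q ^ (k.choose 2 + n * (2 * n + 1 - k)) * qbin q (2 * n + 1) k := by
    intro k _
    have : C q ^ (k.choose 2) * (-X) ^ k *
      (C q ^ n) ^ (2 * n + 1 - k) * qbin (C q) (2 * n + 1) k =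
      C ((-1) ^ k * q ^ (k.choose 2 + n * (2 * n + 1 - k)) * qbin q (2 * n + 1) k) * X ^ k := by
      rw [qbin_C, neg_pow (X : ℂ[X])]
      simp only [C_mul, C_pow, C_neg, C_1, pow_add, pow_mul]
      ring
    rw [this, derivative_C_mul_X_pow]
    simp
    ring
  have h2 := congrArg (fun p : ℂ[X] => (derivative p).eval 1) h
  simp only [derivative_sum, eval_finsetSum] at h2
  rw [Finset.sum_congr rfl hr] at h2
  rw [← h2, derivative_mul]
  have hd : derivative (C q ^ n - X * C q ^ n) = -C (q ^ n) := by
    rw [← C_pow, derivative_sub, derivative_C, mul_comm, derivative_C_mul, derivative_X]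
    ring
  rw [hd]
  simp [eval_prod]

lemma choose_two_formula (a : ℕ) : 2 * ((a + 1).choose 2) = a * (a + 1) := by
  have := Nat.triangle_succ a
  rw [Nat.choose_two_right, Nat.add_sub_cancel]
  rw [Nat.mul_div_cancel' (by rw [mul_comm]; exact (Nat.even_mul_succ_self a).two_dvd)]
  ring

lemma qpoch_ne_zero (q : ℂ) (hq : ‖q‖ < 1) (n : ℕ) : qpoch q n ≠ 0 := by
  refine Finset.prod_ne_zero_iff.2 fun i _ h => ?_
  have h1 : ‖q ^ (i + 1)‖ < 1 := by
    rw [norm_pow]; exact pow_lt_one₀ (norm_nonneg _) hq (by omega)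
  rw [← sub_eq_zero.1 h] at h1
  simp at h1

lemma qbin_eq (q : ℂ) (hq : ‖q‖ < 1) (k m N : ℕ) (h : k + m = N) :
    qbin q N k = qpoch q N / (qpoch q k * qpoch q m) := by
  subst h
  rw [eq_div_iff (mul_ne_zero (qpoch_ne_zero q hq _) (qpoch_ne_zero q hq _))]
  exact qbin_mul q _ k m rfl

lemma left_prod (q : ℂ) (n : ℕ) : ∏ i ∈ Finset.range n, (q ^ n - q ^ i) =
    (-1) ^ n * q ^ (n.choose 2) * qpoch q n := by
  have h1 : ∀ i ∈ Finset.range n, q ^ n - q ^ i = (-1) * q ^ i * (1 - q ^ (n - 1 - i + 1)) := by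
    intro i hi
    have hi := Finset.mem_range.1 hi
    have : q ^ n = q ^ i * q ^ (n - 1 - i + 1) := by rw [← pow_add]; congr 1; omega
    rw [this]; ring
  rw [Finset.prod_congr rfl h1, Finset.prod_mul_distrib, Finset.prod_mul_distrib,
    Finset.prod_range_reflect (fun i => 1 - q ^ (i + 1)) n, Finset.prod_pow_eq_pow_sum,
    Finset.sum_range_id, ← Nat.choose_two_right]
  simp [qpoch]

lemma right_prod (q : ℂ) (n : ℕ) : ∏ i ∈ Finset.range n, (q ^ n - q ^ (n + 1 + i)) =
    q ^ (n * n) * qpoch q n := by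
  have h1 : ∀ i ∈ Finset.range n, q ^ n - q ^ (n + 1 + i) = q ^ n * (1 - q ^ (i + 1)) := by
    intro i hi
    ring
  rw [Finset.prod_congr rfl h1, Finset.prod_mul_distrib]
  simp [qpoch, pow_mul]

lemma finite_jacobi (q : ℂ) (hq : ‖q‖ < 1) (hq0 : q ≠ 0) (n : ℕ) :
    ∑ j ∈ Finset.range (n + 1), (-1 : ℂ) ^ j * (2 * j + 1) * q ^ (j * (j + 1) / 2) *
      (qpoch q (2 * n + 1) / (qpoch q (n + 1 + j) * qpoch q (n - j))) = qpoch q n ^ 2 := by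
  have h := deriv_identity q n
  rw [left_prod, right_prod, show 2 * n + 2 = (n + 1) + (n + 1) by ring, Finset.sum_range_add,
    ← Finset.sum_range_reflect, ← Finset.sum_add_distrib] at h
  have hne : (-1 : ℂ) ^ n * q ^ (n + n.choose 2 + n * n) ≠ 0 := by
    simp [hq0]
  apply mul_left_cancel₀ (neg_ne_zero.2 hne)
  have hl : -((-1 : ℂ) ^ n * q ^ (n + n.choose 2 + n * n)) * qpoch q n ^ 2 =
    -q ^ n * ((-1) ^ n * q ^ (n.choose 2) * qpoch q n * (q ^ (n * n) * qpoch q n)) := by ring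
  rw [hl, h, Finset.mul_sum]
  refine Finset.sum_congr rfl fun j hj => ?_
  have hj := Finset.mem_range.1 hj
  obtain ⟨m, rfl⟩ : ∃ m, n = j + m := ⟨n - j, by omega⟩
  have e1 : j + m + 1 - 1 - j = m := by omega
  have e2 : j + m - j = m := by omega
  rw [e1, e2, qbin_eq q hq m (j + m + 1 + j) _ (by ring),
    qbin_eq q hq (j + m + 1 + j) m _ (by ring), mul_comm (qpoch q m)]
  have e3 : 2 * (j + m) + 1 - m = 2 * j + m + 1 := by omega
  have e4 : 2 * (j + m) + 1 - (j + m + 1 + j) = m := by omega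
  have ec : j * (j + 1) / 2 = (j + 1).choose 2 := by
    rw [Nat.choose_two_right, Nat.add_sub_cancel, mul_comm]
  have hP : ∀ a : ℕ, a + 2 * a.choose 2 = a * a := by
    intro a
    cases a with
    | zero => rfl
    | succ a => rw [choose_two_formula]; ring
  have t1 := hP (j + m)
  have t2 := hP m
  have t3 := choose_two_formula j
  have t4 := choose_two_formula (j + m + j)
  have x1 : m.choose 2 + (j + m) * (2 * j + m + 1) =
      ((j + m) + (j + m).choose 2 + (j + m) * (j + m)) + (j + 1).choose 2 := by
    nlinarith
  have x2 : (j + m + 1 + j).choose 2 + (j + m) * m =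
      ((j + m) + (j + m).choose 2 + (j + m) * (j + m)) + (j + 1).choose 2 := by
    rw [show j + m + 1 + j = j + m + j + 1 by ring]
    nlinarith
  rw [e3, e4, ec, x1, x2, pow_add q _ ((j + 1).choose 2)]
  have s1 : (-1 : ℂ) ^ (j + m + 1 + j) = - (-1) ^ m := by
    rw [show j + m + 1 + j = 2 * j + (m + 1) by ring, pow_add, pow_mul, pow_succ _ m]; simp
  have s2 : (-1 : ℂ) ^ (j + m) * (-1) ^ j = (-1) ^ m := by
    rw [← pow_add, show j + m + j = 2 * j + m by ring, pow_add, pow_mul]; simp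
  rw [s1, ← s2]
  push_cast
  ring

lemma summable_q (q : ℂ) (hq : ‖q‖ < 1) : Summable fun n : ℕ => ‖-q ^ (n + 1)‖ := by
  simp only [norm_neg, norm_pow]
  exact (summable_nat_add_iff 1).2 (summable_geometric_of_lt_one (norm_nonneg _) hq)

lemma mult_q (q : ℂ) (hq : ‖q‖ < 1) : Multipliable fun n : ℕ => 1 - q ^ (n + 1) := by
  simpa [sub_eq_add_neg] using multipliable_one_add_of_summable (summable_q q hq)

lemma qpoch_tendsto (q : ℂ) (hq : ‖q‖ < 1) :
    Filter.Tendsto (qpoch q) Filter.atTop (nhds (∏' n : ℕ, (1 - q ^ (n + 1)))) :=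
  (mult_q q hq).tendsto_prod_tprod_nat

lemma qprod_ne_zero (q : ℂ) (hq : ‖q‖ < 1) : ∏' n : ℕ, (1 - q ^ (n + 1)) ≠ 0 := by
  have := tprod_one_add_ne_zero_of_summable (f := fun n : ℕ => -q ^ (n + 1)) (fun i h => by
    have := qpoch_ne_zero q hq (i + 1)
    rw [qpoch_succ, sub_eq_add_neg, h] at this
    simp at this) (summable_q q hq)
  simpa [sub_eq_add_neg] using this

theorem psi_eq_eta_cubed (q : ℂ) (hq : ‖q‖ < 1) :
    ∑' k : ℕ, (-1 : ℂ) ^ k * (2 * k + 1) * q ^ (k * (k + 1) / 2)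
      = ∏' ν : ℕ, (1 - q ^ (ν + 1)) ^ 3 := by
  have hT : ∀ k : ℕ, k ≤ k * (k + 1) / 2 := by
    intro k
    rw [Nat.le_div_iff_mul_le (by norm_num)]
    rcases k with _ | k <;> nlinarith
  by_cases hq0 : q = 0
  · subst hq0
    rw [tsum_eq_single 0]
    · simp
    · intro k hk
      have := hT k
      rw [zero_pow (by omega)]; simp
  rw [(mult_q q hq).tprod_pow 3]
  have hlim := qpoch_tendsto q hq
  have hPne := qprod_ne_zero q hq
  set P := ∏' n : ℕ, (1 - q ^ (n + 1)) with hP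
  -- uniform bounds
  obtain ⟨A, hA⟩ : ∃ A : ℝ, ∀ n, ‖qpoch q n‖ ≤ A := by
    obtain ⟨A, hA⟩ := (Metric.isBounded_range_of_tendsto _ hlim).exists_norm_le
    exact ⟨A, fun n => hA _ ⟨n, rfl⟩⟩
  obtain ⟨B, hB⟩ : ∃ B : ℝ, ∀ n, ‖(qpoch q n)⁻¹‖ ≤ B := by
    obtain ⟨B, hB⟩ := (Metric.isBounded_range_of_tendsto _ (hlim.inv₀ hPne)).exists_norm_le
    exact ⟨B, fun n => hB _ ⟨n, rfl⟩⟩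
  have hA0 : 0 ≤ A := (norm_nonneg _).trans (hA 0)
  have hB0 : 0 ≤ B := (norm_nonneg _).trans (hB 0)
  let f : ℕ → ℕ → ℂ := fun n j => if j ∈ Finset.range (n + 1) then
    (-1 : ℂ) ^ j * (2 * j + 1) * q ^ (j * (j + 1) / 2) *
      (qpoch q (2 * n + 1) / (qpoch q (n + 1 + j) * qpoch q (n - j))) else 0
  have hf : ∀ n, ∑' j, f n j = qpoch q n ^ 2 := by
    intro n
    rw [← finite_jacobi q hq hq0 n, tsum_eq_sum (s := Finset.range (n + 1))]
    · exact Finset.sum_congr rfl fun j hj => if_pos hj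
    · intro j hj; exact if_neg hj
  have hsum : Summable fun j : ℕ => ((2 * j + 1 : ℝ) * ‖q‖ ^ j) * (A * (B * B)) := by
    apply Summable.mul_right
    have h1 := summable_pow_mul_geometric_of_norm_lt_one (R := ℝ) 1 (r := ‖q‖) (by simpa using hq)
    have h0 := summable_geometric_of_lt_one (norm_nonneg q) hq
    refine ((h1.mul_left 2).add h0).congr fun j => ?_
    ring
  have hD := tendsto_tsum_of_dominated_convergence (𝓕 := Filter.atTop) (f := f)
    (g := fun j : ℕ => (-1 : ℂ) ^ j * (2 * j + 1) * q ^ (j * (j + 1) / 2) * (P / (P * P)))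
    hsum ?_ ?_
  · simp only [hf] at hD
    have := tendsto_nhds_unique hD (hlim.pow 2)
    rw [tsum_mul_right] at this
    field_simp at this
    rw [this]
  · intro j
    have h1 : Filter.Tendsto (fun n : ℕ => qpoch q (2 * n + 1)) Filter.atTop (nhds P) :=
      hlim.comp (Filter.tendsto_atTop_mono (fun n => by simp; omega) Filter.tendsto_id)
    have h2 : Filter.Tendsto (fun n : ℕ => qpoch q (n + 1 + j)) Filter.atTop (nhds P) :=
      hlim.comp (Filter.tendsto_atTop_mono (fun n => by simp; omega) Filter.tendsto_id)
    have h3 : Filter.Tendsto (fun n : ℕ => qpoch q (n - j)) Filter.atTop (nhds P) :=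
      hlim.comp (Filter.tendsto_sub_atTop_nat j)
    refine ((h1.div (h2.mul h3) (mul_ne_zero hPne hPne)).const_mul _).congr' ?_
    filter_upwards [Filter.eventually_ge_atTop j] with n hn
    exact (if_pos (Finset.mem_range.2 (by omega))).symm
  · refine Filter.Eventually.of_forall fun n j => ?_
    by_cases hj : j ∈ Finset.range (n + 1)
    · simp only [f, if_pos hj, div_eq_mul_inv, mul_inv]
      rw [norm_mul, norm_mul, norm_mul, norm_mul, norm_mul, norm_pow, norm_pow, norm_neg,
        norm_one, one_pow, one_mul]
      have hn : ‖(2 * j + 1 : ℂ)‖ = 2 * j + 1 := by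
        have : (2 * j + 1 : ℂ) = ((2 * j + 1 : ℕ) : ℂ) := by push_cast; rfl
        rw [this, Complex.norm_natCast]; push_cast; rfl
      rw [hn]
      have hp := pow_le_pow_of_le_one (norm_nonneg q) hq.le (hT j)
      gcongr
      · exact hA _
      · exact hB _
      · exact hB _
    · simp only [f, if_neg hj, norm_zero]
      positivity
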